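/- Let V ∈ L²(ℝ³;ℝ) be the unique function such that ∫_{ℝ³} V(x)(∫_{ℝ³} e^{−ik·x}φ(k) dk) dx = ∫_{ℝ³} v(k)φ(k) dk for every Schwartz function φ. There exists C > 0 such that for every differentiable u : ℝ³ → ℂ with ∇u ∈ L²(ℝ³) and ‖u‖_{L²} = 1, one has for almost every x ∈ ℝ³: ∫_{ℝ³} |V(x−y)|² |u(y)|² dy ≤ C ‖u‖_{H¹}^{3/2}; i.e., ‖V²∗|u|²‖_{L^∞} ≤ C‖u‖_{H¹}^{3/2}. -/

import Mathlib

open MeasureTheory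
open scoped ENNReal

noncomputable section

/-- The dispersion relation `ω(k) = √(1+|k|²)` of the massive scalar field. -/
def ω (k : EuclideanSpace ℝ (Fin 3)) : ℝ := Real.sqrt (1 + ‖k‖ ^ 2)

/-- `v(k) = −4/(ω(k)(|k|²+ω(k))) + 2/(|k|²+ω(k))²`, which is `(2π)^{3/2}` times the
Fourier transform of the effective pair potential `V` of the dressed Nelson model. -/
def vker (k : EuclideanSpace ℝ (Fin 3)) : ℝ :=
  -4 / (ω k * (‖k‖ ^ 2 + ω k)) + 2 / (‖k‖ ^ 2 + ω k) ^ 2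

/-- The square of the `H¹`-norm, `‖u‖_{H¹}² = ‖u‖_{L²}² + ‖∇u‖_{L²}²`. -/
def H1sq (u : EuclideanSpace ℝ (Fin 3) → ℂ) : ℝ :=
  (∫ x, ‖u x‖ ^ 2) + ∫ x, ‖fderiv ℝ u x‖ ^ 2

/-- The `H¹`-norm of `u`. -/
def H1norm (u : EuclideanSpace ℝ (Fin 3) → ℂ) : ℝ := Real.sqrt (H1sq u)

/-!
Since `v(k) = O(⟨k⟩⁻³)`, the function `⟨k⟩ v(k)` is square integrable on `ℝ³`. So `V` lies in `H¹`,
hence in `L⁶` by the Sobolev embedding. Hölder's inequality with `1/6 + 1/3 = 1/2` then gives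
`∫ |V(x - y)|² |u(y)|² dy ≤ ‖V‖₆² ‖u‖₃²`, and the Gagliardo–Nirenberg inequality
`‖u‖₃² ≤ 2 ‖u‖₂ ‖∇u‖₂` controls the last factor. It comes from applying the case `p = 1` of the
Sobolev inequality to `|u|²`; applied to `|u|⁴`, the same device gives the embedding of `H¹` in
`L⁶`.
-/

section GagliardoNirenberg

open Filter Topology Function
open scoped NNReal

variable {F : Type*} [NormedAddCommGroup F]

theorem enorm_le_lintegral_enorm_deriv [NormedSpace ℝ F] [CompleteSpace F] {f : ℝ → F}
    (hf : Differentiable ℝ f) (hfi : ∫⁻ t, ‖f t‖ₑ ≠ ∞) (a : ℝ) :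
    ‖f a‖ₑ ≤ ∫⁻ t, ‖deriv f t‖ₑ := by
  by_cases hdi : ∫⁻ t, ‖deriv f t‖ₑ = ∞
  · simp [hdi]
  have hint : Integrable f := ⟨hf.continuous.aestronglyMeasurable, hfi.lt_top⟩
  have hint' : Integrable (deriv f) := ⟨aestronglyMeasurable_deriv f _, Ne.lt_top hdi⟩
  have hderiv : ∀ x ∈ Set.Iic a, HasDerivAt f (deriv f x) x := fun x _ ↦ (hf x).hasDerivAt
  have hlim : Tendsto f atBot (𝓝 0) :=
    tendsto_zero_of_hasDerivAt_of_integrableOn_Iic hderiv hint'.integrableOn hint.integrableOn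
  calc ‖f a‖ₑ
      = ‖∫ t in Set.Iic a, deriv f t‖ₑ := by
        rw [integral_Iic_of_hasDerivAt_of_tendsto' hderiv hint'.integrableOn hlim, sub_zero]
    _ ≤ ∫⁻ t in Set.Iic a, ‖deriv f t‖ₑ := enorm_integral_le_lintegral_enorm _
    _ ≤ ∫⁻ t, ‖deriv f t‖ₑ := setLIntegral_le_lintegral _ _

-- Along almost every line `f` is integrable, but this must hold along every line: the `ε` term is
-- infinite on the exceptional ones, and is removed after integrating over all variables.
theorem enorm_le_lintegral_enorm_deriv_add [NormedSpace ℝ F] [CompleteSpace F] {f : ℝ → F}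
    (hf : Differentiable ℝ f) {ε : ℝ≥0∞} (hε : ε ≠ 0) (a : ℝ) :
    ‖f a‖ₑ ≤ ∫⁻ t, (‖deriv f t‖ₑ + ε * ‖f t‖ₑ) := by
  have hfm : Measurable fun t ↦ ‖f t‖ₑ := hf.continuous.enorm.measurable
  rw [lintegral_add_right _ (hfm.const_mul ε), lintegral_const_mul _ hfm]
  by_cases hfi : ∫⁻ t, ‖f t‖ₑ = ∞
  · simp [hfi, ENNReal.mul_top hε]
  · exact (enorm_le_lintegral_enorm_deriv hf hfi a).trans le_self_add

variable {ι : Type*}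

theorem enorm_le_lintegral_update_of_fderiv_single_le [Finite ι] [DecidableEq ι] [NormedSpace ℝ F]
    [CompleteSpace F] {u : (ι → ℝ) → F} (hu : Differentiable ℝ u) {g : (ι → ℝ) → ℝ≥0∞} {i : ι}
    (hug : ∀ x, ‖fderiv ℝ u x (Pi.single i 1)‖ₑ ≤ g x) {ε : ℝ≥0∞} (hε : ε ≠ 0) (x : ι → ℝ) :
    ‖u x‖ₑ ≤ ∫⁻ t, (g (update x i t) + ε * ‖u (update x i t)‖ₑ) := by
  have := Fintype.ofFinite ι
  have hderiv (t : ℝ) : HasDerivAt (fun t ↦ u (update x i t))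
      (fderiv ℝ u (update x i t) (Pi.single i 1)) t :=
    (hu _).hasFDerivAt.comp_hasDerivAt t (hasDerivAt_update x i t)
  have h := enorm_le_lintegral_enorm_deriv_add (fun t ↦ (hderiv t).differentiableAt) hε (x i)
  simp only [update_eq_self, (hderiv _).deriv] at h
  exact h.trans (by gcongr; exact hug _)

variable [Fintype ι]

theorem lintegral_enorm_rpow_le_add_of_fderiv_single_le [DecidableEq ι] [NormedSpace ℝ F]
    [CompleteSpace F] {p : ℝ} (hp : Real.HolderConjugate (Fintype.card ι) p) {u : (ι → ℝ) → F}
    (hu : Differentiable ℝ u) {g : (ι → ℝ) → ℝ≥0∞} (hg : Measurable g)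
    (hug : ∀ x i, ‖fderiv ℝ u x (Pi.single i 1)‖ₑ ≤ g x) {ε : ℝ≥0∞} (hε : ε ≠ 0) :
    ∫⁻ x, ‖u x‖ₑ ^ p ≤ ((∫⁻ x, g x) + ε * ∫⁻ x, ‖u x‖ₑ) ^ p := by
  have hum : Measurable fun x ↦ ‖u x‖ₑ := hu.continuous.enorm.measurable
  have hexp : 0 ≤ 1 / (Fintype.card ι - 1 : ℝ) := one_div_nonneg.2 (sub_nonneg.2 hp.lt.le)
  calc ∫⁻ x, ‖u x‖ₑ ^ p
      = ∫⁻ x, ∏ _i : ι, ‖u x‖ₑ ^ (1 / (Fintype.card ι - 1 : ℝ)) := by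
        congr! with x
        rw [Finset.prod_const, ← ENNReal.rpow_natCast, ← ENNReal.rpow_mul, hp.conjugate_eq,
          Finset.card_univ]
        ring_nf
    _ ≤ ∫⁻ x, ∏ i, (∫⁻ t, (g (update x i t) + ε * ‖u (update x i t)‖ₑ)) ^
          (1 / (Fintype.card ι - 1 : ℝ)) := by
        gcongr with x i
        exact enorm_le_lintegral_update_of_fderiv_single_le hu (hug · i) hε x
    _ ≤ (∫⁻ x, (g x + ε * ‖u x‖ₑ)) ^ p :=
        lintegral_prod_lintegral_pow_le (fun _ ↦ volume) hp (by fun_prop)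
    _ = ((∫⁻ x, g x) + ε * ∫⁻ x, ‖u x‖ₑ) ^ p := by
        rw [lintegral_add_left hg, lintegral_const_mul _ hum]

theorem lintegral_enorm_rpow_le_of_fderiv_single_le [DecidableEq ι] [NormedSpace ℝ F]
    [CompleteSpace F] {p : ℝ} (hp : Real.HolderConjugate (Fintype.card ι) p) {u : (ι → ℝ) → F}
    (hu : Differentiable ℝ u) (hui : ∫⁻ x, ‖u x‖ₑ ≠ ∞) {g : (ι → ℝ) → ℝ≥0∞} (hg : Measurable g)
    (hug : ∀ x i, ‖fderiv ℝ u x (Pi.single i 1)‖ₑ ≤ g x) :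
    ∫⁻ x, ‖u x‖ₑ ^ p ≤ (∫⁻ x, g x) ^ p := by
  have hlim : Tendsto (fun ε ↦ ((∫⁻ x, g x) + ε * ∫⁻ x, ‖u x‖ₑ) ^ p) (𝓝[>] 0)
      (𝓝 (((∫⁻ x, g x) + 0 * ∫⁻ x, ‖u x‖ₑ) ^ p)) :=
    ((ENNReal.Tendsto.mul_const tendsto_id (.inr hui)).const_add _).ennrpow_const p
      |>.mono_left nhdsWithin_le_nhds
  rw [zero_mul, add_zero] at hlim
  exact ge_of_tendsto hlim (eventually_mem_nhdsWithin.mono fun ε hε ↦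
    lintegral_enorm_rpow_le_add_of_fderiv_single_le hp hu hg hug (ne_of_gt hε))

theorem eLpNorm_le_eLpNorm_fderiv_one_of_integrable [NormedSpace ℝ F] [CompleteSpace F] {p : ℝ≥0}
    (hp : NNReal.HolderConjugate (Fintype.card ι) p) {u : EuclideanSpace ℝ ι → F}
    (hu : Differentiable ℝ u) (hui : Integrable u) :
    eLpNorm u p volume ≤ eLpNorm (fderiv ℝ u) 1 volume := by
  classical
  have hp0 : 0 < (p : ℝ) := hp.coe.symm.pos
  have hmp := PiLp.volume_preserving_toLp ι
  let e := (EuclideanSpace.equiv ι ℝ).symm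
  have hum : Measurable fun x ↦ ‖u x‖ₑ := hu.continuous.enorm.measurable
  have hdum : Measurable fun x ↦ ‖fderiv ℝ u x‖ₑ := (measurable_fderiv ℝ u).enorm
  have hsingle (x : ι → ℝ) (i : ι) :
      ‖fderiv ℝ (u ∘ e) x (Pi.single i 1)‖ₑ ≤ ‖fderiv ℝ u (e x)‖ₑ := by
    rw [e.comp_right_fderiv]
    calc ‖fderiv ℝ u (e x) (e (Pi.single i 1))‖ₑ
        ≤ ‖fderiv ℝ u (e x)‖ₑ * ‖e (Pi.single i 1)‖ₑ := (fderiv ℝ u (e x)).le_opENorm _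
      _ = ‖fderiv ℝ u (e x)‖ₑ := by
        rw [← ofReal_norm (e _)]
        simp [e]
  rw [eLpNorm_nnreal_eq_lintegral hp.symm.ne_zero, eLpNorm_one_eq_lintegral_enorm, one_div,
    ENNReal.rpow_inv_le_iff hp0]
  have hui' : ∫⁻ x, ‖(u ∘ e) x‖ₑ ≠ ∞ := (hmp.lintegral_comp hum).trans_ne hui.2.ne
  rw [← hmp.lintegral_comp (hum.pow_const (p : ℝ)), ← hmp.lintegral_comp hdum]
  exact lintegral_enorm_rpow_le_of_fderiv_single_le (u := u ∘ e) hp.coe (by fun_prop) hui'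
    (by fun_prop) hsingle

theorem eLpNorm_rpow_le_mul_eLpNorm_fderiv [InnerProductSpace ℝ F] [CompleteSpace F]
    {p κ : ℝ≥0} (hp : NNReal.HolderConjugate (Fintype.card ι) p) (hκ : 0 < κ)
    (s r : ℝ≥0∞) [s.HolderConjugate r] {u : EuclideanSpace ℝ ι → F}
    (hu : Differentiable ℝ u) (huκ : MemLp u (κ + 1)) :
    eLpNorm u (p * (κ + 1)) ^ (κ + 1 : ℝ) ≤
      (κ + 1) * (eLpNorm u (s * κ) ^ (κ : ℝ) * eLpNorm (fderiv ℝ u) r) := by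
  have hκ' : 0 < (κ : ℝ) := hκ
  have hκ1 : 0 < (κ + 1 : ℝ) := by positivity
  have hof : ENNReal.ofReal (κ + 1) = κ + 1 := by
    rw [ENNReal.ofReal_add κ.coe_nonneg zero_le_one, ENNReal.ofReal_coe_nnreal, ENNReal.ofReal_one]
  have hint : Integrable fun x ↦ ‖u x‖ ^ (κ + 1 : ℝ) := by
    simpa using! huκ.integrable_norm_rpow (by simp) (by simp)
  have hdu : Measurable fun x ↦ ‖fderiv ℝ u x‖ := (measurable_fderiv ℝ u).norm
  have hpow : Continuous fun x ↦ ‖u x‖ ^ (κ : ℝ) := hu.continuous.norm.rpow_const (by simp)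
  have hfderiv (x) : ‖fderiv ℝ (fun x ↦ ‖u x‖ ^ (κ + 1 : ℝ)) x‖ₑ ≤
      ↑(κ + 1) * ‖‖u x‖ ^ (κ : ℝ) • ‖fderiv ℝ u x‖‖ₑ := by
    refine (enorm_fderiv_norm_rpow_le (p := κ + 1) hu (lt_add_of_pos_left 1 hκ)).trans_eq ?_
    rw [enorm_smul, Real.enorm_rpow_of_nonneg (norm_nonneg _) κ.coe_nonneg, enorm_norm, enorm_norm,
      mul_assoc, NNReal.coe_add, NNReal.coe_one, add_sub_cancel_right]
  calc eLpNorm u (p * (κ + 1)) volume ^ (κ + 1 : ℝ)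
      = eLpNorm (fun x ↦ ‖u x‖ ^ (κ + 1 : ℝ)) p volume := by
        rw [eLpNorm_norm_rpow u hκ1, hof]
    _ ≤ eLpNorm (fderiv ℝ fun x ↦ ‖u x‖ ^ (κ + 1 : ℝ)) 1 volume :=
        eLpNorm_le_eLpNorm_fderiv_one_of_integrable hp (hu.norm_rpow (by simpa)) hint
    _ ≤ ↑(κ + 1) * eLpNorm ((fun x ↦ ‖u x‖ ^ (κ : ℝ)) • fun x ↦ ‖fderiv ℝ u x‖) 1 volume :=
        eLpNorm_le_nnreal_smul_eLpNorm_of_ae_le_mul' (.of_forall hfderiv) 1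
    _ ≤ (κ + 1) * (eLpNorm (fun x ↦ ‖u x‖ ^ (κ : ℝ)) s volume *
          eLpNorm (fun x ↦ ‖fderiv ℝ u x‖) r volume) := by
        gcongr
        · simp
        · exact eLpNorm_smul_le_mul_eLpNorm hdu.aestronglyMeasurable hpow.aestronglyMeasurable
    _ = (κ + 1) * (eLpNorm u (s * κ) volume ^ (κ : ℝ) * eLpNorm (fderiv ℝ u) r volume) := by
        rw [eLpNorm_norm_rpow u hκ', ENNReal.ofReal_coe_nnreal, eLpNorm_norm]

theorem eLpNorm_le_mul_eLpNorm_fderiv [InnerProductSpace ℝ F] [CompleteSpace F]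
    {p κ : ℝ≥0} (hp : NNReal.HolderConjugate (Fintype.card ι) p) (hκ : 0 < κ)
    {s r : ℝ≥0∞} [s.HolderConjugate r] (hs : s * κ = p * (κ + 1)) {u : EuclideanSpace ℝ ι → F}
    (hu : Differentiable ℝ u) (huκ : MemLp u (κ + 1)) (hus : MemLp u (s * κ)) :
    eLpNorm u (s * κ) ≤ (κ + 1) * eLpNorm (fderiv ℝ u) r := by
  have h := eLpNorm_rpow_le_mul_eLpNorm_fderiv hp hκ s r hu huκ
  rw [← hs] at h
  have htop := hus.eLpNorm_ne_top
  generalize eLpNorm u (s * κ) volume = N at h htop ⊢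
  obtain rfl | h0 := eq_or_ne N 0
  · simp
  have hsplit : N ^ (κ + 1 : ℝ) = N ^ (κ : ℝ) * N := by
    rw [ENNReal.rpow_add _ _ h0 htop, ENNReal.rpow_one]
  have hN0 : N ^ (κ : ℝ) ≠ 0 := by simp [h0, htop]
  have hNtop : N ^ (κ : ℝ) ≠ ∞ := by simp [h0, htop]
  exact (ENNReal.mul_le_mul_iff_right hN0 hNtop).1
    (hsplit.symm.trans_le (h.trans_eq (mul_left_comm _ _ _)))

theorem eLpNorm_three_sq_le [InnerProductSpace ℝ F] [CompleteSpace F]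
    {u : EuclideanSpace ℝ (Fin 3) → F} (hu : Differentiable ℝ u) (hu2 : MemLp u 2) :
    eLpNorm u 3 ^ 2 ≤ 2 * (eLpNorm u 2 * eLpNorm (fderiv ℝ u) 2) := by
  have hp : NNReal.HolderConjugate (Fintype.card (Fin 3)) (3 / 2) := by
    rw [NNReal.holderConjugate_iff]; norm_num
  have h3 : (3 / 2 * 2 : ℝ≥0∞) = 3 := ENNReal.div_mul_cancel two_ne_zero ENNReal.ofNat_ne_top
  simpa [one_add_one_eq_two, h3] using
    eLpNorm_rpow_le_mul_eLpNorm_fderiv hp one_pos 2 2 hu (by simpa [one_add_one_eq_two])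

theorem eLpNorm_le_mul_eLpNorm_fderiv_two [InnerProductSpace ℝ F] [CompleteSpace F] {q : ℝ≥0}
    (hn : 2 < Fintype.card ι) (hq : (q : ℝ)⁻¹ = 2⁻¹ - (Fintype.card ι : ℝ)⁻¹)
    {u : EuclideanSpace ℝ ι → F} (hu : Differentiable ℝ u) (huq : ∀ p, MemLp u p) :
    eLpNorm u q ≤ (↑(q / 2) + 1) * eLpNorm (fderiv ℝ u) 2 := by
  have hn' : (2 : ℝ) < Fintype.card ι := by exact_mod_cast hn
  have hq0 : 0 < (q : ℝ) := inv_pos.1 (hq ▸ sub_pos.2 (inv_strictAnti₀ two_pos hn'))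
  have hp : NNReal.HolderConjugate (Fintype.card ι) (2 * q / (q + 2)) := by
    rw [NNReal.holderConjugate_iff, ← NNReal.coe_inj]
    refine ⟨by exact_mod_cast one_lt_two.trans hn, ?_⟩
    push_cast
    rw [← sub_eq_of_eq_add' (eq_add_of_sub_eq hq.symm)]
    field
  have h2 : (2 : ℝ≥0∞) * ↑(q / 2) = q := by
    rw [← ENNReal.coe_ofNat, ← ENNReal.coe_mul, mul_div_cancel₀ _ two_ne_zero]
  have hs : (2 : ℝ≥0∞) * ↑(q / 2) = ↑(2 * q / (q + 2)) * (↑(q / 2) + 1) := by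
    rw [h2]
    norm_cast
    field
  have h := eLpNorm_le_mul_eLpNorm_fderiv (r := 2) hp (half_pos (NNReal.coe_pos.1 hq0)) hs hu
    (huq _) (huq _)
  rwa [h2] at h

end GagliardoNirenberg

section SobolevEmbedding

open Filter Topology Function FourierTransform SchwartzMap LineDeriv
open scoped NNReal Real

theorem eLpNorm_le_of_tendsto_Lp {α F : Type*} {_ : MeasurableSpace α} {μ : Measure α}
    [NormedAddCommGroup F] {p q : ℝ≥0∞} [Fact (1 ≤ p)] {f : ℕ → Lp F p μ} {g : Lp F p μ}
    {C : ℝ≥0∞} (hfg : Tendsto f atTop (𝓝 g)) (hC : ∀ n, eLpNorm (f n) q μ ≤ C) :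
    eLpNorm g q μ ≤ C := by
  obtain ⟨k, -, hk⟩ := (tendstoInMeasure_of_tendsto_Lp hfg).exists_seq_tendsto_ae
  exact Lp.eLpNorm_le_of_ae_tendsto (.of_forall fun n ↦ hC (k n))
    (fun _ ↦ Lp.aestronglyMeasurable _) hk

theorem norm_le_sum_norm_apply_single {ι F : Type*} [Fintype ι] [DecidableEq ι]
    [NormedAddCommGroup F] [NormedSpace ℝ F] (A : EuclideanSpace ℝ ι →L[ℝ] F) :
    ‖A‖ ≤ ∑ i, ‖A (EuclideanSpace.single i 1)‖ := by
  refine A.opNorm_le_bound (by positivity) fun x ↦ ?_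
  calc ‖A x‖ = ‖∑ i, x i • A (EuclideanSpace.single i 1)‖ := by
        conv_lhs => rw [← (EuclideanSpace.basisFun ι ℝ).sum_repr x]
        simp
    _ ≤ ∑ i, ‖x‖ * ‖A (EuclideanSpace.single i 1)‖ := by
        refine norm_sum_le_of_le _ fun i _ ↦ ?_
        rw [norm_smul]
        gcongr
        exact PiLp.norm_apply_le x i
    _ = (∑ i, ‖A (EuclideanSpace.single i 1)‖) * ‖x‖ := by rw [← Finset.mul_sum, mul_comm]

theorem eLpNorm_le_sum_eLpNorm_apply_single {α ι F : Type*} {_ : MeasurableSpace α}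
    {μ : Measure α} [Fintype ι] [DecidableEq ι] [NormedAddCommGroup F] [NormedSpace ℝ F]
    {A : α → EuclideanSpace ℝ ι →L[ℝ] F}
    (hA : AEStronglyMeasurable A μ) {p : ℝ≥0∞} (hp : 1 ≤ p) :
    eLpNorm A p μ ≤ ∑ i, eLpNorm (fun x ↦ A x (EuclideanSpace.single i 1)) p μ := by
  have hAi (i : ι) : AEStronglyMeasurable (fun x ↦ ‖A x (EuclideanSpace.single i 1)‖) μ :=
    (hA.apply_continuousLinearMap _).norm
  calc eLpNorm A p μ
      ≤ eLpNorm (∑ i, fun x ↦ ‖A x (EuclideanSpace.single i 1)‖) p μ :=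
        eLpNorm_mono_real fun x ↦ by simpa using norm_le_sum_norm_apply_single (A x)
    _ ≤ ∑ i, eLpNorm (fun x ↦ ‖A x (EuclideanSpace.single i 1)‖) p μ :=
        eLpNorm_sum_le (fun i _ ↦ hAi i) hp
    _ = ∑ i, eLpNorm (fun x ↦ A x (EuclideanSpace.single i 1)) p μ := by simp only [eLpNorm_norm]

variable {E : Type*} [NormedAddCommGroup E] [InnerProductSpace ℝ E] [FiniteDimensional ℝ E]
  [MeasurableSpace E] [BorelSpace E]

section WeightedDensity

variable {F : Type*} [NormedAddCommGroup F] [NormedSpace ℝ F]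

theorem exists_seq_tendsto_toLp_smulLeftCLM {μ : Measure E} [μ.HasTemperateGrowth]
    [IsFiniteMeasureOnCompacts μ] {p : ℝ≥0∞} [Fact (1 ≤ p)] (hp : p ≠ ∞) {w : E → ℝ}
    (hw : w.HasTemperateGrowth) (hw0 : ∀ ξ, w ξ ≠ 0) (hw1 : ∀ ξ, ‖w ξ‖ ≤ 1) {g : Lp F p μ}
    (hg : MemLp (fun ξ ↦ (w ξ)⁻¹ • g ξ) p μ) :
    ∃ (φ : ℕ → 𝓢(E, F)) (C : ℝ),
      Tendsto (fun n ↦ (smulLeftCLM F w (φ n)).toLp p μ) atTop (𝓝 g) ∧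
      ∀ n, eLpNorm (φ n) p μ ≤ ENNReal.ofReal C := by
  obtain ⟨h, hh, hlim⟩ :=
    mem_closure_iff_seq_limit.1 (denseRange_toLpCLM (F := F) (μ := μ) hp (hg.toLp _))
  choose φ hφ using hh
  obtain rfl : (fun n ↦ (φ n).toLp p μ) = h := funext hφ
  obtain ⟨C, hC⟩ := hlim.norm.bddAbove_range
  refine ⟨φ, C, ?_, fun n ↦ ?_⟩
  · refine tendsto_iff_norm_sub_tendsto_zero.2 (squeeze_zero (fun _ ↦ norm_nonneg _) (fun n ↦ ?_)
      (tendsto_iff_norm_sub_tendsto_zero.1 hlim))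
    refine Lp.norm_le_norm_of_ae_le ?_
    filter_upwards [Lp.coeFn_sub ((smulLeftCLM F w (φ n)).toLp p μ) g,
      (smulLeftCLM F w (φ n)).coeFn_toLp p μ, Lp.coeFn_sub ((φ n).toLp p μ) (hg.toLp _),
      (φ n).coeFn_toLp p μ, hg.coeFn_toLp] with ξ h1 h2 h3 h4 h5
    rw [h1, h3, Pi.sub_apply, Pi.sub_apply, h2, h4, h5, smulLeftCLM_apply_apply hw]
    calc ‖w ξ • φ n ξ - g ξ‖ = ‖w ξ • (φ n ξ - (w ξ)⁻¹ • g ξ)‖ := by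
          rw [smul_sub, smul_inv_smul₀ (hw0 ξ)]
      _ ≤ ‖φ n ξ - (w ξ)⁻¹ • g ξ‖ := by
          rw [norm_smul]
          exact mul_le_of_le_one_left (norm_nonneg _) (hw1 ξ)
  · calc eLpNorm (φ n) p μ = ENNReal.ofReal ‖(φ n).toLp p μ‖ := by
          rw [norm_toLp, ENNReal.ofReal_toReal ((φ n).memLp p μ).eLpNorm_ne_top]
      _ ≤ ENNReal.ofReal C := ENNReal.ofReal_le_ofReal (hC ⟨n, rfl⟩)

theorem exists_seq_tendsto_toLp_of_memLp_rpow_smul {μ : Measure E} [μ.HasTemperateGrowth]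
    [IsFiniteMeasureOnCompacts μ] {p : ℝ≥0∞} [Fact (1 ≤ p)] (hp : p ≠ ∞) {g : Lp F p μ}
    (hg : MemLp (fun ξ ↦ (1 + ‖ξ‖ ^ 2) ^ (1 / 2 : ℝ) • g ξ) p μ) :
    ∃ (ψ : ℕ → 𝓢(E, F)) (C : ℝ), Tendsto (fun n ↦ (ψ n).toLp p μ) atTop (𝓝 g) ∧
      ∀ n, eLpNorm (fun ξ ↦ ‖ξ‖ • ψ n ξ) p μ ≤ ENNReal.ofReal C := by
  let w (ξ : E) : ℝ := (1 + ‖ξ‖ ^ 2) ^ (-(1 / 2) : ℝ)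
  have hw : w.HasTemperateGrowth := by fun_prop
  have hw0 (ξ : E) : 0 < w ξ := by positivity
  have hw_inv (ξ : E) : (w ξ)⁻¹ = (1 + ‖ξ‖ ^ 2) ^ (1 / 2 : ℝ) := by
    rw [← Real.rpow_neg (by positivity), neg_neg]
  have hw1 (ξ : E) : ‖w ξ‖ ≤ 1 := by
    rw [Real.norm_of_nonneg (by positivity)]
    exact Real.rpow_le_one_of_one_le_of_nonpos (by simp) (by norm_num)
  have hwξ (ξ : E) : ‖‖ξ‖ * w ξ‖ ≤ 1 := by
    rw [Real.norm_of_nonneg (by positivity), ← le_div_iff₀ (hw0 ξ), one_div, hw_inv,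
      ← Real.sqrt_eq_rpow]
    exact Real.le_sqrt_of_sq_le (by simp)
  obtain ⟨φ, C, hlim, hC⟩ := exists_seq_tendsto_toLp_smulLeftCLM hp hw
    (fun ξ ↦ (hw0 ξ).ne') hw1 (g := g) (by simpa only [hw_inv])
  refine ⟨fun n ↦ smulLeftCLM F w (φ n), C, hlim, fun n ↦ (eLpNorm_mono fun ξ ↦ ?_).trans (hC n)⟩
  rw [smulLeftCLM_apply_apply hw, smul_smul, norm_smul]
  exact mul_le_of_le_one_left (norm_nonneg _) (hwξ ξ)

end WeightedDensity

variable {F : Type*} [NormedAddCommGroup F] [InnerProductSpace ℂ F] [CompleteSpace F]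

theorem eLpNorm_two_fourierInv (ψ : 𝓢(E, F)) :
    eLpNorm (𝓕⁻ ψ : 𝓢(E, F)) 2 = eLpNorm ψ 2 := by
  have h := norm_fourier_toL2_eq (𝓕⁻ ψ)
  rw [fourier_fourierInv_eq, norm_toLp, norm_toLp] at h
  exact ((ENNReal.toReal_eq_toReal_iff' (ψ.memLp 2 _).eLpNorm_ne_top
    ((𝓕⁻ ψ).memLp 2 _).eLpNorm_ne_top).1 h).symm

theorem eLpNorm_two_fderiv_fourierInv_apply_le (ψ : 𝓢(E, F)) (m : E) :
    eLpNorm (fun x ↦ fderiv ℝ (𝓕⁻ ψ : 𝓢(E, F)) x m) 2 ≤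
      ENNReal.ofReal (2 * π * ‖m‖) * eLpNorm (fun ξ ↦ ‖ξ‖ • ψ ξ) 2 := by
  have hm : (inner ℝ · m : E → ℝ).HasTemperateGrowth := by fun_prop
  have hderiv : (fun x ↦ fderiv ℝ (𝓕⁻ ψ : 𝓢(E, F)) x m) = (∂_{m} (𝓕⁻ ψ) : 𝓢(E, F)) := rfl
  rw [hderiv, lineDerivOp_fourierInv_eq, eLpNorm_two_fourierInv]
  refine eLpNorm_le_mul_eLpNorm_of_ae_le_mul (.of_forall fun ξ ↦ ?_) 2
  rw [smul_apply, smulLeftCLM_apply_apply hm]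
  calc ‖(2 * π * Complex.I : ℂ) • inner ℝ ξ m • ψ ξ‖
      = 2 * π * (‖inner ℝ ξ m‖ * ‖ψ ξ‖) := by
        simp [norm_smul, abs_of_pos Real.pi_pos]
    _ ≤ 2 * π * (‖ξ‖ * ‖m‖ * ‖ψ ξ‖) := by
        gcongr
        exact norm_inner_le_norm ξ m
    _ = 2 * π * ‖m‖ * ‖‖ξ‖ • ψ ξ‖ := by
        rw [norm_smul, norm_norm]
        ring

variable {ι : Type*} [Fintype ι]

theorem eLpNorm_fourierInv_le {q : ℝ≥0}
    (hn : 2 < Fintype.card ι) (hq : (q : ℝ)⁻¹ = 2⁻¹ - (Fintype.card ι : ℝ)⁻¹)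
    (ψ : 𝓢(EuclideanSpace ℝ ι, F)) :
    eLpNorm (𝓕⁻ ψ : 𝓢(EuclideanSpace ℝ ι, F)) q ≤
      (↑(q / 2) + 1) *
        (Fintype.card ι * (ENNReal.ofReal (2 * π) * eLpNorm (fun ξ ↦ ‖ξ‖ • ψ ξ) 2)) := by
  classical
  let _ : InnerProductSpace ℝ F := .complexToReal
  have hmeas : AEStronglyMeasurable (fderiv ℝ (𝓕⁻ ψ : 𝓢(EuclideanSpace ℝ ι, F))) volume :=
    (fderivCLM ℝ _ _ (𝓕⁻ ψ)).continuous.aestronglyMeasurable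
  calc eLpNorm (𝓕⁻ ψ : 𝓢(EuclideanSpace ℝ ι, F)) q volume
      ≤ (↑(q / 2) + 1) * eLpNorm (fderiv ℝ (𝓕⁻ ψ : 𝓢(EuclideanSpace ℝ ι, F))) 2 volume :=
        eLpNorm_le_mul_eLpNorm_fderiv_two hn hq (𝓕⁻ ψ).differentiable fun p ↦ (𝓕⁻ ψ).memLp p _
    _ ≤ (↑(q / 2) + 1) * ∑ i, eLpNorm (fun x ↦ fderiv ℝ (𝓕⁻ ψ : 𝓢(EuclideanSpace ℝ ι, F)) x
          (EuclideanSpace.single i 1)) 2 volume := by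
        gcongr
        exact eLpNorm_le_sum_eLpNorm_apply_single hmeas one_le_two
    _ ≤ (↑(q / 2) + 1) *
          ∑ _ : ι, ENNReal.ofReal (2 * π) * eLpNorm (fun ξ ↦ ‖ξ‖ • ψ ξ) 2 volume := by
        gcongr
        simpa using eLpNorm_two_fderiv_fourierInv_apply_le ψ (EuclideanSpace.single _ (1 : ℝ))
    _ = _ := by simp

theorem memLp_of_memLp_smul_fourier {q : ℝ≥0}
    (hn : 2 < Fintype.card ι) (hq : (q : ℝ)⁻¹ = 2⁻¹ - (Fintype.card ι : ℝ)⁻¹)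
    {f : Lp F 2 (volume : Measure (EuclideanSpace ℝ ι))}
    (hf : MemLp (fun ξ ↦ (1 + ‖ξ‖ ^ 2) ^ (1 / 2 : ℝ) • 𝓕 f ξ) 2 volume) :
    MemLp f q := by
  obtain ⟨ψ, C, hψ, hC⟩ := exists_seq_tendsto_toLp_of_memLp_rpow_smul ENNReal.ofNat_ne_top hf
  have hlim : Tendsto (fun n ↦ (𝓕⁻ (ψ n)).toLp 2 volume) atTop (𝓝 f) := by
    simpa only [comp_def, toLp_fourierInv_eq, fourierInv_fourier_eq] using
      (continuous_fourierInv.tendsto (𝓕 f)).comp hψ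
  have hbound (n : ℕ) : eLpNorm ((𝓕⁻ (ψ n)).toLp 2 volume) q volume ≤
      (↑(q / 2) + 1) * (Fintype.card ι * (ENNReal.ofReal (2 * π) * ENNReal.ofReal C)) := by
    rw [eLpNorm_congr_ae ((𝓕⁻ (ψ n)).coeFn_toLp 2 volume)]
    grw [eLpNorm_fourierInv_le hn hq, hC n]
  refine ⟨Lp.aestronglyMeasurable f, (eLpNorm_le_of_tendsto_Lp hlim hbound).trans_lt ?_⟩
  finiteness

theorem fourier_eq_of_integral_fourier_smul_eq {f g : Lp F 2 (volume : Measure E)}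
    (h : ∀ φ : 𝓢(E, ℂ), ∫ x, 𝓕 φ x • f x = ∫ ξ, φ ξ • g ξ) : 𝓕 f = g := by
  have hinj : Injective (Lp.toTemperedDistributionCLM F (volume : Measure E) 2) :=
    LinearMap.ker_eq_bot.1 Lp.ker_toTemperedDistributionCLM_eq_bot
  refine hinj ?_
  rw [Lp.toTemperedDistributionCLM_apply, Lp.toTemperedDistributionCLM_apply,
    ← Lp.fourier_toTemperedDistribution_eq]
  ext φ
  rw [TemperedDistribution.fourier_apply, Lp.toTemperedDistribution_apply,
    Lp.toTemperedDistribution_apply, h φ]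

-- Mathlib's Fourier kernel is `exp (-2πi⟪ξ, x⟫)`, so test functions and `g` are dilated by `2π`.
theorem fourier_toLp_eq_of_integral_exp_smul_eq {f g : E → F} (hf : MemLp f 2 volume)
    (hg : MemLp (fun ξ ↦ g ((2 * π) • ξ)) 2 volume)
    (h : ∀ φ : 𝓢(E, ℂ), ∫ x, (∫ k, Complex.exp (-(Complex.I * (inner ℝ k x : ℝ))) * φ k) • f x =
      ∫ k, φ k • g k) :
    𝓕 (hf.toLp f) = hg.toLp _ := by
  refine fourier_eq_of_integral_fourier_smul_eq fun ψ ↦ ?_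
  let c : ℝ := |((2 * π) ^ Module.finrank ℝ E)⁻¹|
  let φ : 𝓢(E, ℂ) := compCLMOfContinuousLinearEquiv ℂ
    (ContinuousLinearEquiv.smulLeft (Units.mk0 (2 * π) Real.two_pi_pos.ne')⁻¹) ψ
  have hφ (ξ : E) : φ ((2 * π) • ξ) = ψ ξ := by
    change ψ ((2 * π)⁻¹ • (2 * π) • ξ) = ψ ξ
    rw [inv_smul_smul₀ Real.two_pi_pos.ne']
  have fourier_eq (x : E) :
      𝓕 ψ x = c • ∫ k, Complex.exp (-(Complex.I * (inner ℝ k x : ℝ))) * φ k := by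
    rw [← Measure.integral_comp_smul, fourier_coe, Real.fourier_eq']
    simp only [hφ, inner_smul_left, smul_eq_mul]
    congr! 4
    simp
    ring
  calc ∫ x, 𝓕 ψ x • hf.toLp f x
      = ∫ x, c • (∫ k, Complex.exp (-(Complex.I * (inner ℝ k x : ℝ))) * φ k) • f x := by
        refine integral_congr_ae ?_
        filter_upwards [hf.coeFn_toLp] with x hx
        rw [hx, fourier_eq, smul_assoc]
    _ = c • ∫ k, φ k • g k := by rw [integral_smul, h φ]
    _ = ∫ ξ, ψ ξ • g ((2 * π) • ξ) := by
        rw [← Measure.integral_comp_smul]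
        simp only [hφ]
    _ = ∫ ξ, ψ ξ • hg.toLp _ ξ := by
        refine integral_congr_ae ?_
        filter_upwards [hg.coeFn_toLp] with ξ hξ
        rw [hξ]

end SobolevEmbedding

section Potential

open FourierTransform SchwartzMap
open scoped NNReal Real

theorem one_le_ω (k : EuclideanSpace ℝ (Fin 3)) : 1 ≤ ω k := by
  rw [ω, Real.one_le_sqrt]
  simp

theorem ω_sq (k : EuclideanSpace ℝ (Fin 3)) : ω k ^ 2 = 1 + ‖k‖ ^ 2 :=
  Real.sq_sqrt (by positivity)

theorem ω_pos (k : EuclideanSpace ℝ (Fin 3)) : 0 < ω k := one_pos.trans_le (one_le_ω k)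

theorem continuous_ω : Continuous ω := by
  unfold ω
  fun_prop

theorem continuous_vker : Continuous vker := by
  have hω := continuous_ω
  have hpos := ω_pos
  have hpos' (k : EuclideanSpace ℝ (Fin 3)) : 0 < ‖k‖ ^ 2 + ω k := by have := hpos k; positivity
  unfold vker
  refine .add (.div (by fun_prop) (by fun_prop) fun k ↦ ?_)
    (.div (by fun_prop) (by fun_prop) fun k ↦ ?_)
  · exact (mul_pos (hpos k) (hpos' k)).ne'
  · exact (pow_pos (hpos' k) 2).ne'

theorem abs_vker_le (k : EuclideanSpace ℝ (Fin 3)) : |vker k| ≤ 6 / ω k ^ 3 := by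
  have h1 := one_le_ω k
  have := ω_pos k
  have hω : ω k ^ 2 ≤ ‖k‖ ^ 2 + ω k := by linarith [ω_sq k]
  have hfst : |-4 / (ω k * (‖k‖ ^ 2 + ω k))| ≤ 4 / ω k ^ 3 := by
    rw [neg_div, abs_neg, abs_of_pos (by positivity), pow_succ' (ω k) 2]
    gcongr
  have hsnd : |2 / (‖k‖ ^ 2 + ω k) ^ 2| ≤ 2 / ω k ^ 3 := by
    rw [abs_of_pos (by positivity)]
    gcongr
    calc ω k ^ 3 ≤ ω k ^ 4 := pow_le_pow_right₀ h1 (by norm_num)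
      _ = (ω k ^ 2) ^ 2 := by ring
      _ ≤ (‖k‖ ^ 2 + ω k) ^ 2 := by gcongr
  calc |vker k| ≤ 4 / ω k ^ 3 + 2 / ω k ^ 3 := (abs_add_le _ _).trans (add_le_add hfst hsnd)
    _ = 6 / ω k ^ 3 := by ring

theorem memLp_rpow_smul_vker_comp_smul :
    MemLp (fun ξ ↦ (1 + ‖ξ‖ ^ 2) ^ (1 / 2 : ℝ) • (vker ((2 * π) • ξ) : ℂ)) 2 volume := by
  have hv := continuous_vker
  have hmeas : Continuous fun ξ : EuclideanSpace ℝ (Fin 3) ↦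
      (1 + ‖ξ‖ ^ 2) ^ (1 / 2 : ℝ) • (vker ((2 * π) • ξ) : ℂ) :=
    .smul (.rpow_const (by fun_prop) (by simp)) (by fun_prop)
  have hint : Integrable fun ξ : EuclideanSpace ℝ (Fin 3) ↦ (1 + ‖ξ‖ ^ 2) ^ (-4 / 2 : ℝ) :=
    integrable_rpow_neg_one_add_norm_sq (by simp; norm_num)
  rw [memLp_two_iff_integrable_sq_norm hmeas.aestronglyMeasurable]
  refine (hint.const_mul 36).mono' (hmeas.norm.pow 2).aestronglyMeasurable (.of_forall fun ξ ↦ ?_)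
  have hpos : 0 < 1 + ‖ξ‖ ^ 2 := by positivity
  have hω : 1 + ‖ξ‖ ^ 2 ≤ ω ((2 * π) • ξ) ^ 2 := by
    rw [ω_sq, norm_smul, Real.norm_of_nonneg Real.two_pi_pos.le]
    gcongr
    exact le_mul_of_one_le_left (norm_nonneg ξ) (by linarith [Real.pi_gt_three])
  rw [norm_smul, Complex.norm_real, Real.norm_of_nonneg (by positivity),
    Real.norm_of_nonneg (by positivity), Real.norm_eq_abs, ← Real.sqrt_eq_rpow, mul_pow,
    Real.sq_sqrt hpos.le]
  calc (1 + ‖ξ‖ ^ 2) * |vker ((2 * π) • ξ)| ^ 2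
      ≤ (1 + ‖ξ‖ ^ 2) * (6 / ω ((2 * π) • ξ) ^ 3) ^ 2 := by
        gcongr
        exact abs_vker_le _
    _ = 36 * ((1 + ‖ξ‖ ^ 2) / (ω ((2 * π) • ξ) ^ 2) ^ 3) := by ring
    _ ≤ 36 * ((1 + ‖ξ‖ ^ 2) / (1 + ‖ξ‖ ^ 2) ^ 3) := by gcongr
    _ = 36 * (1 + ‖ξ‖ ^ 2) ^ (-4 / 2 : ℝ) := by
        rw [show (-4 / 2 : ℝ) = -(2 : ℕ) by norm_num, Real.rpow_neg hpos.le, Real.rpow_natCast]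
        field

theorem memLp_vker_comp_smul :
    MemLp (fun ξ ↦ (vker ((2 * π) • ξ) : ℂ)) 2 volume := by
  have hv := continuous_vker
  refine memLp_rpow_smul_vker_comp_smul.mono (by fun_prop) (.of_forall fun ξ ↦ ?_)
  rw [norm_smul, Real.norm_of_nonneg (by positivity)]
  exact le_mul_of_one_le_left (norm_nonneg _) (Real.one_le_rpow (by simp) (by norm_num))

theorem memLp_six_of_integral_fourier_eq {V : EuclideanSpace ℝ (Fin 3) → ℝ}
    (hV2 : MemLp V 2 volume)
    (hVFourier : ∀ φ : 𝓢(EuclideanSpace ℝ (Fin 3), ℂ),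
      (∫ x, (V x : ℂ) * ∫ k, Complex.exp (-(Complex.I * (inner ℝ k x : ℝ))) * φ k) =
        ∫ k, (vker k : ℂ) * φ k) :
    MemLp V 6 volume := by
  have hVc : MemLp (fun x ↦ (V x : ℂ)) 2 volume := hV2.ofReal
  have hfourier : 𝓕 (hVc.toLp _) = memLp_vker_comp_smul.toLp _ :=
    fourier_toLp_eq_of_integral_exp_smul_eq (g := fun k ↦ (vker k : ℂ)) hVc memLp_vker_comp_smul
      fun φ ↦ by simpa only [smul_eq_mul, mul_comm] using hVFourier φ
  have hweight : MemLp (fun ξ ↦ (1 + ‖ξ‖ ^ 2) ^ (1 / 2 : ℝ) • 𝓕 (hVc.toLp _) ξ) 2 volume := by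
    refine (memLp_congr_ae ?_).2 memLp_rpow_smul_vker_comp_smul
    rw [hfourier]
    filter_upwards [memLp_vker_comp_smul.coeFn_toLp] with ξ hξ
    rw [hξ]
  have h6 : MemLp (hVc.toLp _) (6 : ℝ≥0) volume :=
    memLp_of_memLp_smul_fourier (by simp) (by norm_num) hweight
  exact ((memLp_congr_ae hVc.coeFn_toLp).1 h6).re

end Potential

section Convolution

theorem eLpNorm_comp_sub_left_smul_le {G 𝕜 F : Type*} [MeasurableSpace G] [AddGroup G]
    [MeasurableAdd G] [MeasurableNeg G] {μ : Measure G} [μ.IsNegInvariant]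
    [μ.IsAddLeftInvariant] [NormedRing 𝕜] [NormedAddCommGroup F] [MulActionWithZero 𝕜 F]
    [IsBoundedSMul 𝕜 F] {p q r : ℝ≥0∞} [p.HolderTriple q r] {f : G → 𝕜} {g : G → F}
    (hf : AEStronglyMeasurable f μ) (hg : AEStronglyMeasurable g μ) (x : G) :
    eLpNorm (fun y ↦ f (x - y) • g y) r μ ≤ eLpNorm f p μ * eLpNorm g q μ := by
  have hmp := Measure.measurePreserving_sub_left μ x
  calc eLpNorm (fun y ↦ f (x - y) • g y) r μ
      ≤ eLpNorm (f ∘ (x - ·)) p μ * eLpNorm g q μ :=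
        eLpNorm_smul_le_mul_eLpNorm hg (hf.comp_measurePreserving hmp)
    _ = eLpNorm f p μ * eLpNorm g q μ := by rw [eLpNorm_comp_measurePreserving hf hmp]

theorem eLpNorm_two_sq {α F : Type*} {_ : MeasurableSpace α} {μ : Measure α}
    [NormedAddCommGroup F] (f : α → F) :
    eLpNorm f 2 μ ^ 2 = ∫⁻ x, ENNReal.ofReal (‖f x‖ ^ 2) ∂μ := by
  have h := eLpNorm_nnreal_pow_eq_lintegral (f := f) (μ := μ) (p := 2) two_ne_zero
  simpa [ENNReal.ofReal_pow] using h

theorem eLpNorm_two_eq_ofReal_sqrt {α F : Type*} {_ : MeasurableSpace α} {μ : Measure α}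
    [NormedAddCommGroup F] {f : α → F} (hf : MemLp f 2 μ) :
    eLpNorm f 2 μ = ENNReal.ofReal √(∫ x, ‖f x‖ ^ 2 ∂μ) := by
  simpa [Real.sqrt_eq_rpow] using hf.eLpNorm_eq_integral_rpow_norm two_ne_zero ENNReal.ofNat_ne_top

theorem holderTriple_six_three_two : ENNReal.HolderTriple 6 3 2 := by
  rw [ENNReal.holderTriple_iff, ← ENNReal.toReal_eq_toReal_iff' (by simp) (by simp),
    ENNReal.toReal_add (by simp) (by simp)]
  norm_num

theorem lintegral_ofReal_sq_comp_sub_mul_sq_le {F : Type*} [NormedAddCommGroup F]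
    [InnerProductSpace ℝ F] [CompleteSpace F]
    {V : EuclideanSpace ℝ (Fin 3) → ℝ} (hV : AEStronglyMeasurable V volume)
    {u : EuclideanSpace ℝ (Fin 3) → F} (hu : Differentiable ℝ u) (hu2 : MemLp u 2)
    (x : EuclideanSpace ℝ (Fin 3)) :
    ∫⁻ y, ENNReal.ofReal (|V (x - y)| ^ 2 * ‖u y‖ ^ 2) ≤
      eLpNorm V 6 volume ^ 2 * (2 * (eLpNorm u 2 volume * eLpNorm (fderiv ℝ u) 2 volume)) := by
  have := holderTriple_six_three_two
  calc ∫⁻ y, ENNReal.ofReal (|V (x - y)| ^ 2 * ‖u y‖ ^ 2)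
      = eLpNorm (fun y ↦ V (x - y) • u y) 2 volume ^ 2 := by
        simp only [eLpNorm_two_sq, norm_smul, mul_pow, Real.norm_eq_abs]
    _ ≤ (eLpNorm V 6 volume * eLpNorm u 3 volume) ^ 2 := by
        gcongr
        exact eLpNorm_comp_sub_left_smul_le hV hu.continuous.aestronglyMeasurable x
    _ ≤ eLpNorm V 6 volume ^ 2 * (2 * (eLpNorm u 2 volume * eLpNorm (fderiv ℝ u) 2 volume)) := by
        rw [mul_pow]
        gcongr
        exact eLpNorm_three_sq_le hu hu2

theorem sqrt_mul_sqrt_le_H1norm_rpow {u : EuclideanSpace ℝ (Fin 3) → ℂ}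
    (hu : (∫ x, ‖u x‖ ^ 2) = 1) :
    √(∫ x, ‖u x‖ ^ 2) * √(∫ x, ‖fderiv ℝ u x‖ ^ 2) ≤ H1norm u ^ (3 / 2 : ℝ) := by
  have hgrad : 0 ≤ ∫ x, ‖fderiv ℝ u x‖ ^ 2 := integral_nonneg fun x ↦ sq_nonneg _
  have hH1 : H1norm u = √(1 + ∫ x, ‖fderiv ℝ u x‖ ^ 2) := by rw [H1norm, H1sq, hu]
  have hone : 1 ≤ H1norm u := by
    rw [hH1, Real.one_le_sqrt]
    linarith
  calc √(∫ x, ‖u x‖ ^ 2) * √(∫ x, ‖fderiv ℝ u x‖ ^ 2)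
      = √(∫ x, ‖fderiv ℝ u x‖ ^ 2) := by rw [hu, Real.sqrt_one, one_mul]
    _ ≤ H1norm u := hH1 ▸ Real.sqrt_le_sqrt (by linarith)
    _ ≤ H1norm u ^ (3 / 2 : ℝ) := Real.self_le_rpow_of_one_le hone (by norm_num)

theorem Vsq_convolution_bound_general {F : Type*} [NormedAddCommGroup F] [InnerProductSpace ℝ F]
    [CompleteSpace F] (V : EuclideanSpace ℝ (Fin 3) → ℝ) (hV2 : MemLp V 2 volume)
    (hVFourier : ∀ φ : SchwartzMap (EuclideanSpace ℝ (Fin 3)) ℂ,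
      (∫ x, ((V x : ℝ) : ℂ) *
          ∫ k, Complex.exp (-(Complex.I * ((inner ℝ k x : ℝ) : ℂ))) * φ k) =
        ∫ k, ((vker k : ℝ) : ℂ) * φ k) :
    ∃ C > 0, ∀ u : EuclideanSpace ℝ (Fin 3) → F,
      Differentiable ℝ u → MemLp u 2 volume → MemLp (fderiv ℝ u) 2 volume →
      ∀ x : EuclideanSpace ℝ (Fin 3),
        ∫⁻ y, ENNReal.ofReal (|V (x - y)| ^ 2 * ‖u y‖ ^ 2) ≤
          ENNReal.ofReal (C * (√(∫ x, ‖u x‖ ^ 2) * √(∫ x, ‖fderiv ℝ u x‖ ^ 2))) := by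
  have hV6 := memLp_six_of_integral_fourier_eq hV2 hVFourier
  let N := (eLpNorm V 6 volume).toReal
  have hN : eLpNorm V 6 volume = ENNReal.ofReal N := (ENNReal.ofReal_toReal hV6.eLpNorm_ne_top).symm
  refine ⟨2 * N ^ 2 + 1, by positivity, fun u hu hu2 hdu x ↦ ?_⟩
  set a := √(∫ x, ‖u x‖ ^ 2)
  set b := √(∫ x, ‖fderiv ℝ u x‖ ^ 2)
  have hab : 0 ≤ a * b := by positivity
  calc ∫⁻ y, ENNReal.ofReal (|V (x - y)| ^ 2 * ‖u y‖ ^ 2)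
      ≤ eLpNorm V 6 volume ^ 2 * (2 * (eLpNorm u 2 volume * eLpNorm (fderiv ℝ u) 2 volume)) :=
        lintegral_ofReal_sq_comp_sub_mul_sq_le hV6.1 hu hu2 x
    _ = ENNReal.ofReal (N ^ 2 * (2 * (a * b))) := by
        rw [hN, eLpNorm_two_eq_ofReal_sqrt hu2, eLpNorm_two_eq_ofReal_sqrt hdu,
          ENNReal.ofReal_mul (by positivity), ENNReal.ofReal_pow (by positivity),
          ENNReal.ofReal_mul two_pos.le, ENNReal.ofReal_ofNat, ENNReal.ofReal_mul (by positivity)]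
    _ ≤ ENNReal.ofReal ((2 * N ^ 2 + 1) * (a * b)) :=
        ENNReal.ofReal_le_ofReal (by linarith)

end Convolution

/-- Let `V ∈ L²(ℝ³;ℝ)` have unnormalized Fourier transform `v`. There is `C > 0` such that
for every differentiable `u` with `∇u ∈ L²` and `‖u‖_{L²} = 1`, for a.e. `x`,
`∫ |V(x−y)|² |u(y)|² dy ≤ C ‖u‖_{H¹}^{3/2}`, i.e. `‖V²∗|u|²‖_{L^∞} ≤ C‖u‖_{H¹}^{3/2}`. -/
theorem Vsq_convolution_bound (V : EuclideanSpace ℝ (Fin 3) → ℝ) (hV2 : MemLp V 2 volume)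
    (hVFourier : ∀ φ : SchwartzMap (EuclideanSpace ℝ (Fin 3)) ℂ,
      (∫ x, ((V x : ℝ) : ℂ) *
          ∫ k, Complex.exp (-(Complex.I * ((inner ℝ k x : ℝ) : ℂ))) * φ k) =
        ∫ k, ((vker k : ℝ) : ℂ) * φ k) :
    ∃ C > 0, ∀ u : EuclideanSpace ℝ (Fin 3) → ℂ,
      Differentiable ℝ u → MemLp u 2 volume →
      MemLp (fun x => fderiv ℝ u x) 2 volume →
      (∫ x, ‖u x‖ ^ 2) = 1 →
      ∀ᵐ x : EuclideanSpace ℝ (Fin 3),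
        ∫⁻ y, ENNReal.ofReal (|V (x - y)| ^ 2 * ‖u y‖ ^ 2) ≤
          ENNReal.ofReal (C * H1norm u ^ (3 / 2 : ℝ)) := by
  obtain ⟨C, hC, h⟩ := Vsq_convolution_bound_general (F := ℂ) V hV2 hVFourier
  refine ⟨C, hC, fun u hu hu2 hdu hnorm ↦ .of_forall fun x ↦ (h u hu hu2 hdu x).trans ?_⟩
  grw [sqrt_mul_sqrt_le_H1norm_rpow hnorm]

end
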